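/- The following are equivalent: (i) pointwise multiplication M × M → M is continuous with respect to the F_μ-topology (so that M_F is a topological ring); (ii) scalar multiplication ℝ × M → M is continuous with respect to the F_μ-topology (so that M_F is a topological vector space over ℝ); (iii) every A ∈ 𝒜_> can be written as a union of finitely many μ-atoms. -/

import Mathlib

open MeasureTheory Topology Set Pointwise

/-- The set of all real-valued measurable functions on `X`, as a subtype. -/
abbrev Mble (X : Type*) [MeasurableSpace X] : Type _ := {f : X → ℝ // Measurable f}

/-- The basic set `B(f, A, ε)`: all `g` such that for some measurable null set `N`,
`sup_{x ∈ A \ N} |f x - g x| < ε`. -/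
def FBall {X : Type*} [MeasurableSpace X] (μ : Measure X) (f : Mble X) (A : Set X)
    (ε : ℝ) : Set (Mble X) :=
  {g | ∃ N : Set X, MeasurableSet N ∧ μ N = 0 ∧
        ∃ b : ℝ, b < ε ∧ ∀ x ∈ A \ N, |f.1 x - g.1 x| ≤ b}

/-- The `F_μ`-topology on `Mble X`, generated by the sets `B(f, A, ε)` with
`A` measurable of finite measure and `ε > 0`. -/
def FTop {X : Type*} [MeasurableSpace X] (μ : Measure X) : TopologicalSpace (Mble X) :=
  TopologicalSpace.generateFrom
    {S | ∃ (f : Mble X) (A : Set X) (ε : ℝ),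
        MeasurableSet A ∧ μ A < ⊤ ∧ 0 < ε ∧ S = FBall μ f A ε}

/-- A `μ`-atom: a measurable set of positive measure admitting no decomposition into two
disjoint measurable pieces of positive measure. -/
def MuAtom {X : Type*} [MeasurableSpace X] (μ : Measure X) (A : Set X) : Prop :=
  MeasurableSet A ∧ 0 < μ A ∧
    ¬ ∃ B C : Set X, MeasurableSet B ∧ MeasurableSet C ∧ Disjoint B C ∧
        B ∪ C = A ∧ 0 < μ B ∧ 0 < μ C

/-- `G` is a union of finitely many `μ`-atoms. -/
def FinAtomUnion {X : Type*} [MeasurableSpace X] (μ : Measure X) (G : Set X) : Prop :=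
  ∃ (n : ℕ) (F : Fin n → Set X), (∀ i, MuAtom μ (F i)) ∧ G = ⋃ i, F i

/-- `L^∞_G`: the measurable functions that are essentially bounded on `G`. -/
def Linf {X : Type*} [MeasurableSpace X] (μ : Measure X) (G : Set X) : Set (Mble X) :=
  {f | ∃ M₀ : ℝ, 0 < M₀ ∧ ∃ N : Set X, MeasurableSet N ∧ μ N = 0 ∧
        ∀ x ∈ G \ N, |f.1 x| ≤ M₀}

/-- The intersection `⋂_{G ∈ 𝒜_>} L^∞_G`. -/
def InterLinf {X : Type*} [MeasurableSpace X] (μ : Measure X) : Set (Mble X) :=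
  ⋂ G ∈ {A : Set X | MeasurableSet A ∧ 0 < μ A ∧ μ A < ⊤}, Linf μ G

/-- The zero function as an element of `Mble X`. -/
def zeroM {X : Type*} [MeasurableSpace X] : Mble X := ⟨fun _ => 0, measurable_const⟩

/-- `μ` is hemifinite: some sequence in `𝒜_>` almost contains every member of `𝒜_>`. -/
def Hemifinite {X : Type*} [MeasurableSpace X] (μ : Measure X) : Prop :=
  ∃ A : ℕ → Set X, (∀ n, MeasurableSet (A n) ∧ 0 < μ (A n) ∧ μ (A n) < ⊤) ∧
    ∀ F : Set X, MeasurableSet F → 0 < μ F → μ F < ⊤ → ∃ n, μ (F \ A n) = 0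

/-- `G⁺`: functions strictly positive μ-almost everywhere on `G`. -/
def Gplus {X : Type*} [MeasurableSpace X] (μ : Measure X) (G : Set X) : Set (Mble X) :=
  {f | ∃ N : Set X, MeasurableSet N ∧ μ N = 0 ∧ ∀ x ∈ G \ N, 0 < f.1 x}

/-- `G⁰`: functions nonnegative μ-almost everywhere on `G`. -/
def Gzero {X : Type*} [MeasurableSpace X] (μ : Measure X) (G : Set X) : Set (Mble X) :=
  {f | ∃ N : Set X, MeasurableSet N ∧ μ N = 0 ∧ ∀ x ∈ G \ N, 0 ≤ f.1 x}

instance {X : Type*} [MeasurableSpace X] : Add (Mble X) :=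
  ⟨fun f g => ⟨f.1 + g.1, f.2.add g.2⟩⟩

/-!
All three conditions amount to every measurable function being essentially bounded on every set of
finite measure.

If `c ↦ c • f` is continuous at `0`, then `|c f| < 1` almost everywhere on `A` for some `c > 0`, so
`f` is essentially bounded on `A`; conversely, the product estimate
`|f g - f' g'| ≤ |f| |g - g'| + |f - f'| |g'|` makes multiplication continuous at pairs of functions
essentially bounded on the sets of finite measure.

On an atom a real measurable function is essentially bounded, because one of the sets `{|f| ≤ n}`
meets the atom in positive measure and hence almost contains it. A set that is not a finite union of
atoms can be split forever, always keeping a part that is not a finite union of atoms; the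
discarded parts `D n` are disjoint of positive measure, and a measurable function equal to `n` on
`D n` is not essentially bounded.
-/

section FTop

variable {X : Type*} [MeasurableSpace X]

/-- Pointwise multiplication, the operation of condition (i). -/
instance : Mul (Mble X) :=
  ⟨fun f g => ⟨f.1 * g.1, f.2.mul g.2⟩⟩

/-- Pointwise scalar multiplication, the operation of condition (ii). -/
instance : SMul ℝ (Mble X) :=
  ⟨fun c f => ⟨fun x => c * f.1 x, f.2.const_mul c⟩⟩

variable {μ : Measure X} {A B : Set X} {f g : Mble X}

theorem exists_measurableSet_null_forall_sdiff_iff {p : X → Prop} :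
    (∃ N, MeasurableSet N ∧ μ N = 0 ∧ ∀ x ∈ A \ N, p x) ↔ ∀ᵐ x ∂μ, x ∈ A → p x := by
  constructor
  · rintro ⟨N, -, hN, hp⟩
    filter_upwards [measure_eq_zero_iff_ae_notMem.1 hN] with x hxN hxA using hp x ⟨hxA, hxN⟩
  · intro h
    obtain ⟨N, hpN, hN, hN0⟩ := exists_measurable_superset_of_null (ae_iff.1 h)
    exact ⟨N, hN, hN0, fun x hx => not_not.1 fun hp => hx.2 (hpN fun h => hp (h hx.1))⟩

theorem mem_fBall_iff {ε : ℝ} :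
    g ∈ FBall μ f A ε ↔ ∃ b < ε, ∀ᵐ x ∂μ, x ∈ A → |f.1 x - g.1 x| ≤ b := by
  simp only [← exists_measurableSet_null_forall_sdiff_iff]
  exact ⟨fun ⟨N, hN, hN0, b, hb, h⟩ => ⟨b, hb, N, hN, hN0, h⟩,
    fun ⟨b, hb, N, hN, hN0, h⟩ => ⟨N, hN, hN0, b, hb, h⟩⟩

theorem mem_linf_iff : f ∈ Linf μ A ↔ ∃ C, ∀ᵐ x ∂μ, x ∈ A → |f.1 x| ≤ C := by
  constructor
  · rintro ⟨C, -, hC⟩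
    exact ⟨C, exists_measurableSet_null_forall_sdiff_iff.1 hC⟩
  · rintro ⟨C, hC⟩
    refine ⟨max C 1, by positivity, exists_measurableSet_null_forall_sdiff_iff.2 ?_⟩
    filter_upwards [hC] with x hx hxA using le_max_of_le_left (hx hxA)

theorem mem_interLinf_iff :
    f ∈ InterLinf μ ↔ ∀ A, MeasurableSet A → μ A < ⊤ → f ∈ Linf μ A := by
  simp only [InterLinf, mem_iInter, mem_ofPred_eq]
  refine ⟨fun h A hA hA' => ?_, fun h A hA => h A hA.1 hA.2.2⟩
  rcases eq_zero_or_pos (μ A) with hA0 | hA0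
  · refine mem_linf_iff.2 ⟨0, ?_⟩
    filter_upwards [measure_eq_zero_iff_ae_notMem.1 hA0] with x hx hxA using absurd hxA hx
  · exact h A ⟨hA, hA0, hA'⟩

theorem interLinf_eq_univ_iff :
    InterLinf μ = univ ↔
      ∀ A, MeasurableSet A → 0 < μ A → μ A < ⊤ → ∀ f : Mble X, f ∈ Linf μ A := by
  simp only [eq_univ_iff_forall, InterLinf, mem_iInter, mem_ofPred_eq]
  exact ⟨fun h A hA hA0 hA' f => h f A ⟨hA, hA0, hA'⟩,
    fun h f A hA => h A hA.1 hA.2.1 hA.2.2 f⟩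

theorem linf_iUnion {ι : Type*} [Finite ι] (F : ι → Set X) :
    Linf μ (⋃ i, F i) = ⋂ i, Linf μ (F i) := by
  ext f
  simp only [mem_iInter, mem_linf_iff, mem_iUnion]
  constructor
  · rintro ⟨C, hC⟩ i
    exact ⟨C, hC.mono fun x hx hxi => hx ⟨i, hxi⟩⟩
  · intro h
    choose C hC using h
    obtain ⟨K, hK⟩ := Finite.exists_le C
    refine ⟨K, ?_⟩
    filter_upwards [ae_all_iff.2 hC] with x hx ⟨i, hxi⟩ using (hx i hxi).trans (hK i)

theorem MuAtom.measure_sdiff_eq_zero {S : Set X} (hA : MuAtom μ A) (hS : MeasurableSet S)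
    (h : μ (A ∩ S) ≠ 0) : μ (A \ S) = 0 := by
  by_contra h'
  exact hA.2.2 ⟨A ∩ S, A \ S, hA.1.inter hS, hA.1.diff hS, disjoint_sdiff_inter.symm,
    inter_union_sdiff A S, pos_iff_ne_zero.2 h, pos_iff_ne_zero.2 h'⟩

theorem MuAtom.mem_linf (hA : MuAtom μ A) (f : Mble X) : f ∈ Linf μ A := by
  let S (n : ℕ) : Set X := {x | |f.1 x| ≤ n}
  have hS (n : ℕ) : MeasurableSet (S n) := measurableSet_le f.2.abs measurable_const
  have hcover : ⋃ n, A ∩ S n = A := by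
    rw [← inter_iUnion, inter_eq_left]
    exact fun x _ => mem_iUnion.2 (exists_nat_ge |f.1 x|)
  obtain ⟨n, hn⟩ : ∃ n, μ (A ∩ S n) ≠ 0 := by
    by_contra! h
    exact hA.2.1.ne' (hcover ▸ measure_iUnion_null h)
  refine mem_linf_iff.2 ⟨n, ?_⟩
  filter_upwards [measure_eq_zero_iff_ae_notMem.1 (hA.measure_sdiff_eq_zero (hS n) hn)]
    with x hx hxA
  exact not_not.1 fun hxS => hx ⟨hxA, hxS⟩

theorem FinAtomUnion.mem_linf (hA : FinAtomUnion μ A) (f : Mble X) : f ∈ Linf μ A := by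
  obtain ⟨n, F, hF, rfl⟩ := hA
  rw [linf_iUnion]
  exact mem_iInter.2 fun i => (hF i).mem_linf f

theorem FinAtomUnion.iUnion_muAtom {ι : Type*} [Finite ι] {F : ι → Set X}
    (hF : ∀ i, MuAtom μ (F i)) : FinAtomUnion μ (⋃ i, F i) := by
  obtain ⟨n, ⟨e⟩⟩ := Finite.exists_equiv_fin ι
  exact ⟨n, F ∘ e.symm, fun i => hF _, (e.symm.surjective.iUnion_comp F).symm⟩

theorem MuAtom.finAtomUnion (hA : MuAtom μ A) : FinAtomUnion μ A := by
  simpa only [iUnion_const] using FinAtomUnion.iUnion_muAtom fun _ : Unit => hA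

theorem FinAtomUnion.union (hA : FinAtomUnion μ A) (hB : FinAtomUnion μ B) :
    FinAtomUnion μ (A ∪ B) := by
  obtain ⟨m, F, hF, rfl⟩ := hA
  obtain ⟨n, G, hG, rfl⟩ := hB
  have h : FinAtomUnion μ (⋃ i, Sum.elim F G i) :=
    .iUnion_muAtom (Sum.forall.2 ⟨hF, hG⟩)
  simpa only [iUnion_sum, Sum.elim_inl, Sum.elim_inr] using h

theorem exists_subset_not_finAtomUnion (hA : MeasurableSet A) (hA0 : 0 < μ A)
    (hfin : ¬ FinAtomUnion μ A) :
    ∃ B ⊆ A, 0 < μ (A \ B) ∧ MeasurableSet B ∧ 0 < μ B ∧ ¬ FinAtomUnion μ B := by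
  obtain ⟨B, C, hB, hC, hBC, rfl, hB0, hC0⟩ :
      ∃ B C : Set X, MeasurableSet B ∧ MeasurableSet C ∧ Disjoint B C ∧
        B ∪ C = A ∧ 0 < μ B ∧ 0 < μ C := by
    by_contra h
    exact hfin (MuAtom.finAtomUnion ⟨hA, hA0, h⟩)
  by_cases hBfin : FinAtomUnion μ B
  · refine ⟨C, subset_union_right, ?_, hC, hC0, fun hCfin => hfin (hBfin.union hCfin)⟩
    rwa [union_sdiff_right, hBC.sdiff_eq_left]
  · refine ⟨B, subset_union_left, ?_, hB, hB0, hBfin⟩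
    rwa [union_sdiff_left, hBC.sdiff_eq_right]

theorem exists_pairwise_disjoint_of_not_finAtomUnion (hA : MeasurableSet A) (hA0 : 0 < μ A)
    (hfin : ¬ FinAtomUnion μ A) :
    ∃ D : ℕ → Set X, (∀ n, MeasurableSet (D n)) ∧ (∀ n, D n ⊆ A) ∧ (∀ n, μ (D n) ≠ 0) ∧
      Pairwise (Function.onFun Disjoint D) := by
  let Splittable := {S : Set X // MeasurableSet S ∧ 0 < μ S ∧ ¬ FinAtomUnion μ S}
  choose part hsub hsdiff hpart using
    fun S : Splittable => exists_subset_not_finAtomUnion S.2.1 S.2.2.1 S.2.2.2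
  let S (n : ℕ) : Splittable := (fun S => ⟨part S, hpart S⟩)^[n] ⟨A, hA, hA0, hfin⟩
  have hsucc (n : ℕ) : (S (n + 1)).1 = part (S n) := by
    simp only [S, Function.iterate_succ_apply']
  have hanti : Antitone fun n => (S n).1 :=
    antitone_nat_of_succ_le fun n => (hsucc n).trans_subset (hsub (S n))
  refine ⟨fun n => (S n).1 \ (S (n + 1)).1, fun n => (S n).2.1.diff (S (n + 1)).2.1,
    fun n => sdiff_subset.trans (hanti n.zero_le), fun n => ?_, ?_⟩
  · simpa only [hsucc] using (hsdiff (S n)).ne'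
  · exact (pairwise_disjoint_on _).2 fun m n hmn =>
      disjoint_sdiff_left.mono_right (sdiff_subset.trans (hanti (Nat.succ_le_of_lt hmn)))

theorem exists_notMem_linf_of_pairwise_disjoint {D : ℕ → Set X} (hD : ∀ n, MeasurableSet (D n))
    (hDA : ∀ n, D n ⊆ A) (hD0 : ∀ n, μ (D n) ≠ 0) (hdisj : Pairwise (Function.onFun Disjoint D)) :
    ∃ f : Mble X, f ∉ Linf μ A := by
  obtain ⟨f, hf, hfD⟩ := exists_measurable_piecewise D hD (fun n _ => (n : ℝ))
    (fun _ => measurable_const)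
    fun i j hij => by simp only [(hdisj hij).inter_eq, eqOn_empty]
  refine ⟨⟨f, hf⟩, fun h => ?_⟩
  obtain ⟨C, hC⟩ := mem_linf_iff.1 h
  obtain ⟨n, hn⟩ := exists_nat_gt C
  refine hD0 n (measure_eq_zero_iff_ae_notMem.2 ?_)
  filter_upwards [hC] with x hx hxD
  have hle : |f x| ≤ C := hx (hDA n hxD)
  rw [hfD n hxD, Nat.abs_cast] at hle
  exact hn.not_ge hle

theorem finAtomUnion_iff_forall_mem_linf (hA : MeasurableSet A) (hA0 : 0 < μ A) :
    FinAtomUnion μ A ↔ ∀ f : Mble X, f ∈ Linf μ A := by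
  refine ⟨FinAtomUnion.mem_linf, fun h => ?_⟩
  by_contra hfin
  obtain ⟨D, hD, hDA, hD0, hdisj⟩ := exists_pairwise_disjoint_of_not_finAtomUnion hA hA0 hfin
  obtain ⟨f, hf⟩ := exists_notMem_linf_of_pairwise_disjoint hD hDA hD0 hdisj
  exact hf (h f)

theorem interLinf_eq_univ_iff_finAtomUnion :
    InterLinf μ = univ ↔ ∀ A, MeasurableSet A → 0 < μ A → μ A < ⊤ → FinAtomUnion μ A := by
  rw [interLinf_eq_univ_iff]
  exact forall₃_congr fun A hA hA0 =>
    imp_congr_right fun _ => (finAtomUnion_iff_forall_mem_linf hA hA0).symm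

theorem fBall_subset_fBall {b ε : ℝ} (h : ∀ᵐ x ∂μ, x ∈ A → |f.1 x - g.1 x| ≤ b) :
    FBall μ g A (ε - b) ⊆ FBall μ f A ε := by
  intro k hk
  obtain ⟨c, hc, hgk⟩ := mem_fBall_iff.1 hk
  refine mem_fBall_iff.2 ⟨b + c, by linarith, ?_⟩
  filter_upwards [h, hgk] with x hx hx' hxA
  exact (abs_sub_le _ _ _).trans (add_le_add (hx hxA) (hx' hxA))

theorem fBall_mem_nhds (f : Mble X) {ε : ℝ} (hA : MeasurableSet A) (hA' : μ A < ⊤)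
    (hε : 0 < ε) : FBall μ f A ε ∈ @nhds _ (FTop μ) f := by
  let := FTop μ
  have hopen : IsOpen (FBall μ f A ε) :=
    TopologicalSpace.isOpen_generateFrom_of_mem ⟨f, A, ε, hA, hA', hε, rfl⟩
  exact hopen.mem_nhds (mem_fBall_iff.2 ⟨0, hε, by simp⟩)

theorem continuous_fTop_iff {Y : Type*} [TopologicalSpace Y] {F : Y → Mble X} :
    Continuous[_, FTop μ] F ↔ ∀ y A ε, MeasurableSet A → μ A < ⊤ → 0 < ε →
      ∀ᶠ z in 𝓝 y, F z ∈ FBall μ (F y) A ε := by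
  let := FTop μ
  refine ⟨fun hF y A ε hA hA' hε => hF.continuousAt (fBall_mem_nhds (F y) hA hA' hε),
    fun h => continuous_generateFrom_iff.2 ?_⟩
  rintro _ ⟨f, A, ε, hA, hA', -, rfl⟩
  refine isOpen_iff_mem_nhds.2 fun y hy => ?_
  obtain ⟨b, hb, hfy⟩ := mem_fBall_iff.1 hy
  filter_upwards [h y A (ε - b) hA hA' (sub_pos.2 hb)] with z hz using fBall_subset_fBall hfy hz

theorem abs_mul_sub_mul_le_of_le {a a' b b' C D δ : ℝ} (ha : |a| ≤ C) (hb : |b| ≤ D)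
    (haa' : |a - a'| ≤ δ) (hbb' : |b - b'| ≤ δ) :
    |a * b - a' * b'| ≤ C * δ + δ * (D + δ) := by
  have hb' : |b'| ≤ D + δ := by
    have := abs_sub_abs_le_abs_sub b' b
    rw [abs_sub_comm] at this
    linarith
  have hC : 0 ≤ C := (abs_nonneg a).trans ha
  have hδ : 0 ≤ δ := (abs_nonneg _).trans haa'
  calc |a * b - a' * b'| = |a * (b - b') + (a - a') * b'| := by ring_nf
    _ ≤ |a| * |b - b'| + |a - a'| * |b'| := by
      simpa only [abs_mul] using abs_add_le (a * (b - b')) ((a - a') * b')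
    _ ≤ C * δ + δ * (D + δ) := by gcongr

theorem exists_forall_mul_mem_fBall (hf : f ∈ Linf μ A) (hg : g ∈ Linf μ A) {ε : ℝ} (hε : 0 < ε) :
    ∃ δ > 0, ∀ f' ∈ FBall μ f A δ, ∀ g' ∈ FBall μ g A δ, f' * g' ∈ FBall μ (f * g) A ε := by
  obtain ⟨C, hfC⟩ := mem_linf_iff.1 hf
  obtain ⟨D, hgD⟩ := mem_linf_iff.1 hg
  have hlim : Filter.Tendsto (fun δ => C * δ + δ * (D + δ)) (𝓝[>] 0) (𝓝 0) :=
    ((by fun_prop : Continuous fun δ => C * δ + δ * (D + δ)).tendsto' 0 0 (by simp)).mono_left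
      nhdsWithin_le_nhds
  obtain ⟨δ, hδε, hδ⟩ := ((hlim.eventually_lt_const hε).and self_mem_nhdsWithin).exists
  refine ⟨δ, hδ, fun f' hf' g' hg' => mem_fBall_iff.2 ⟨_, hδε, ?_⟩⟩
  obtain ⟨b, hb, hff'⟩ := mem_fBall_iff.1 hf'
  obtain ⟨c, hc, hgg'⟩ := mem_fBall_iff.1 hg'
  filter_upwards [hfC, hgD, hff', hgg'] with x hxC hxD hxf hxg hxA
  exact abs_mul_sub_mul_le_of_le (hxC hxA) (hxD hxA) ((hxf hxA).trans hb.le)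
    ((hxg hxA).trans hc.le)

theorem continuousMul_of_interLinf_eq_univ (h : InterLinf μ = univ) :
    @ContinuousMul (Mble X) (FTop μ) _ := by
  let := FTop μ
  refine ⟨continuous_fTop_iff.2 fun ⟨f, g⟩ A ε hA hA' hε => ?_⟩
  have hbdd (f : Mble X) : f ∈ Linf μ A := mem_interLinf_iff.1 (h ▸ mem_univ f) A hA hA'
  obtain ⟨δ, hδ, hmul⟩ := exists_forall_mul_mem_fBall (hbdd f) (hbdd g) hε
  filter_upwards [prod_mem_nhds (fBall_mem_nhds f hA hA' hδ) (fBall_mem_nhds g hA hA' hδ)]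
    with p hp using hmul p.1 hp.1 p.2 hp.2

theorem continuous_const_fTop :
    Continuous[_, FTop μ] fun c : ℝ => (⟨fun _ => c, measurable_const⟩ : Mble X) := by
  refine continuous_fTop_iff.2 fun c A ε _ _ hε => ?_
  filter_upwards [Metric.ball_mem_nhds c hε] with d hd
  exact mem_fBall_iff.2 ⟨|c - d|, by rwa [abs_sub_comm], .of_forall fun _ _ => le_rfl⟩

theorem continuousSMul_of_continuousMul (h : @ContinuousMul (Mble X) (FTop μ) _) :
    @ContinuousSMul ℝ (Mble X) _ _ (FTop μ) := by
  let := FTop μ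
  exact ⟨(continuous_const_fTop.comp continuous_fst).mul continuous_snd⟩

theorem mem_interLinf_of_continuous_smul_const (h : Continuous[_, FTop μ] fun c : ℝ => c • f) :
    f ∈ InterLinf μ := by
  refine mem_interLinf_iff.2 fun A hA hA' => ?_
  have hball : ∀ᶠ c : ℝ in 𝓝 0, c • f ∈ FBall μ ((0 : ℝ) • f) A 1 :=
    continuous_fTop_iff.1 h 0 A 1 hA hA' one_pos
  obtain ⟨c, hcf, hc⟩ :=
    ((hball.filter_mono nhdsWithin_le_nhds).and (self_mem_nhdsWithin (s := Ioi 0))).exists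
  obtain ⟨b, hb, hbound⟩ := mem_fBall_iff.1 hcf
  refine mem_linf_iff.2 ⟨1 / c, ?_⟩
  filter_upwards [hbound] with x hx hxA
  have hle : |0 * f.1 x - c * f.1 x| ≤ b := hx hxA
  rw [zero_mul, zero_sub, abs_neg, abs_mul, abs_of_pos hc] at hle
  rw [le_div_iff₀' hc]
  exact hle.trans hb.le

theorem interLinf_eq_univ_of_continuousSMul (h : @ContinuousSMul ℝ (Mble X) _ _ (FTop μ)) :
    InterLinf μ = univ := by
  let := FTop μ
  exact eq_univ_of_forall fun f =>
    mem_interLinf_of_continuous_smul_const (continuous_id.smul continuous_const)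

theorem stmt7_general (μ : Measure X) :
    ((@Continuous (Mble X × Mble X) (Mble X)
        (@instTopologicalSpaceProd _ _ (FTop μ) (FTop μ)) (FTop μ)
        (fun p => ⟨p.1.1 * p.2.1, p.1.2.mul p.2.2⟩)) ↔
      ∀ A : Set X, MeasurableSet A → 0 < μ A → μ A < ⊤ → FinAtomUnion μ A) ∧
    ((@Continuous (ℝ × Mble X) (Mble X)
        (@instTopologicalSpaceProd _ _ inferInstance (FTop μ)) (FTop μ)
        (fun p => ⟨fun x => p.1 * p.2.1 x, p.2.2.const_mul p.1⟩)) ↔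
      ∀ A : Set X, MeasurableSet A → 0 < μ A → μ A < ⊤ → FinAtomUnion μ A) := by
  let := FTop μ
  rw [← interLinf_eq_univ_iff_finAtomUnion]
  have mul_of_bdd (h : InterLinf μ = univ) : ContinuousMul (Mble X) :=
    continuousMul_of_interLinf_eq_univ h
  have smul_of_mul (h : ContinuousMul (Mble X)) : ContinuousSMul ℝ (Mble X) :=
    continuousSMul_of_continuousMul h
  have bdd_of_smul (h : ContinuousSMul ℝ (Mble X)) : InterLinf μ = univ :=
    interLinf_eq_univ_of_continuousSMul h
  exact ⟨⟨fun h => bdd_of_smul (smul_of_mul ⟨h⟩), fun h => (mul_of_bdd h).continuous_mul⟩,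
    ⟨fun h => bdd_of_smul ⟨h⟩, fun h => (smul_of_mul (mul_of_bdd h)).continuous_smul⟩⟩

end FTop

/-- pointwise multiplication (resp. scalar multiplication) is continuous for
the `F_μ`-topology iff every `A ∈ 𝒜_>` is a finite union of `μ`-atoms. -/
theorem stmt7 {X : Type*} [MeasurableSpace X] (μ : Measure X)
    (hpos : 0 < μ Set.univ)
    (hsub : ∀ A : Set X, MeasurableSet A → μ A = ⊤ →
      ∃ B, B ⊆ A ∧ MeasurableSet B ∧ 0 < μ B ∧ μ B < ⊤) :
    ((@Continuous (Mble X × Mble X) (Mble X)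
        (@instTopologicalSpaceProd _ _ (FTop μ) (FTop μ)) (FTop μ)
        (fun p => ⟨p.1.1 * p.2.1, p.1.2.mul p.2.2⟩)) ↔
      ∀ A : Set X, MeasurableSet A → 0 < μ A → μ A < ⊤ → FinAtomUnion μ A) ∧
    ((@Continuous (ℝ × Mble X) (Mble X)
        (@instTopologicalSpaceProd _ _ inferInstance (FTop μ)) (FTop μ)
        (fun p => ⟨fun x => p.1 * p.2.1 x, p.2.2.const_mul p.1⟩)) ↔
      ∀ A : Set X, MeasurableSet A → 0 < μ A → μ A < ⊤ → FinAtomUnion μ A) := by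
  exact stmt7_general μ
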